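/- arXiv:2407.13114 — 4 statements merged into one kernel-verified Lean document; each statement's English description precedes it below -/
import Mathlib

section
/- For infinitely many N ∈ ℕ, the discrepancy of the Champernowne constant satisfies D(c, N) > 1/(3·10³·log N). -/
open scoped Classical

/-- The `i`-th decimal digit (for `i ≥ 1`) of a real number `α`, using the floor
convention, which for numbers admitting two decimal expansions selects the
expansion ending in a tail of `0`s. -/
noncomputable def digit (α : ℝ) (i : ℕ) : ℕ := (⌊α * 10 ^ i⌋ % 10).toNat

/-- Number of occurrences of the digit block `B` (of length `k`) as consecutive
digits among the first `N` decimal digits of `α`: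
`occ α B N = #{i : 1 ≤ i ≤ N - k + 1 ∧ (α_i, …, α_{i+k-1}) = B}`. -/
noncomputable def occ {k : ℕ} (α : ℝ) (B : Fin k → Fin 10) (N : ℕ) : ℕ :=
  ((Finset.Icc 1 N).filter fun i =>
    i + k ≤ N + 1 ∧ ∀ j : Fin k, digit α (i + (j : ℕ)) = (B j : ℕ)).card

/-- Discrepancy of the first `N` terms of a sequence `(x_n)_{n ≥ 1}` of points of `[0,1)`:
the supremum over `0 ≤ a < b < 1` of `|#{n ≤ N : x n ∈ [a,b)}/N - (b - a)|`. -/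
noncomputable def discSeq (x : ℕ → ℝ) (N : ℕ) : ℝ :=
  sSup {d : ℝ | ∃ a b : ℝ, 0 ≤ a ∧ a < b ∧ b < 1 ∧
    d = |(((Finset.Icc 1 N).filter fun n => x n ∈ Set.Ico a b).card : ℝ) / N - (b - a)|}

/-- Discrepancy of a real number for base 10: the discrepancy of the sequence
`(10^(n-1) α mod 1)_{n ≥ 1}`. -/
noncomputable def D (α : ℝ) (N : ℕ) : ℝ :=
  discSeq (fun n => Int.fract (10 ^ (n - 1) * α)) N

/-- `T v` is the total number of digits in the concatenation of the decimal
representations of `1, 2, …, v`. -/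
def T (v : ℕ) : ℕ := ∑ j ∈ Finset.Icc 1 v, (Nat.digits 10 j).length

/-- The Champernowne constant `c = 0.123456789101112…`, the concatenation of the
positive integers in base 10: the term `m` ends at decimal position `T m`. -/
noncomputable def champ : ℝ := ∑' m : ℕ, (m : ℝ) / 10 ^ T m

/-- `vOf N` is the least `v` with `T v ≥ N` (the term of the concatenation
containing the `N`-th digit). -/
noncomputable def vOf (N : ℕ) : ℕ := sInf {v | N ≤ T v}

/-- `nOf N` is the number of decimal digits of `vOf N`. -/
noncomputable def nOf (N : ℕ) : ℕ := (Nat.digits 10 (vOf N)).length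

/-- Number of non-overlapping occurrences of the block `B` (length `k`) in the string
`s_ℓ` (the concatenation of all `ℓ`-digit integers in increasing order): the number of
pairs `(y, j)` with `10^(ℓ-1) ≤ y < 10^ℓ`, `1 ≤ j ≤ ℓ - k + 1`, such that the digits of
`y` in positions `j, …, j + k - 1` (counted from the left) equal `B`. -/
def occNoSeg {k : ℕ} (B : Fin k → Fin 10) (ℓ : ℕ) : ℕ :=
  ((Finset.Ico (10 ^ (ℓ - 1)) (10 ^ ℓ) ×ˢ Finset.Icc 1 (ℓ - k + 1)).filter fun p =>
    ∀ i : Fin k, p.1 / 10 ^ (ℓ - (p.2 + (i : ℕ))) % 10 = (B i : ℕ)).card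

/-- Number of occurrences of the block `B` (length `k ≤ ℓ`) in the string `s_ℓ` that
straddle the boundary between two consecutive `ℓ`-digit terms `y` and `y + 1`:
the number of pairs `(y, j)` with `10^(ℓ-1) ≤ y < 10^ℓ - 1` and `1 ≤ j ≤ k - 1` such
that the last `j` digits of `y` are `(b₁, …, b_j)` and the first `k - j` digits of
`y + 1` are `(b_{j+1}, …, b_k)`. -/
def occOSeg {k : ℕ} (B : Fin k → Fin 10) (ℓ : ℕ) : ℕ :=
  ((Finset.Ico (10 ^ (ℓ - 1)) (10 ^ ℓ - 1) ×ˢ Finset.Ico 1 k).filter fun p =>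
    (∀ i : Fin k, (i : ℕ) < p.2 → p.1 / 10 ^ (p.2 - 1 - (i : ℕ)) % 10 = (B i : ℕ)) ∧
    (∀ i : Fin k, p.2 ≤ (i : ℕ) →
      (p.1 + 1) / 10 ^ (ℓ - 1 - ((i : ℕ) - p.2)) % 10 = (B i : ℕ))).card

lemma T_succ (v : ℕ) : T (v + 1) = T v + (Nat.digits 10 (v + 1)).length := by
  unfold T
  exact Finset.sum_Icc_succ_top (by omega) _

lemma T_zero : T 0 = 0 := by simp [T]

lemma T_mono : Monotone T := monotone_nat_of_le_succ fun v => by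
  rw [T_succ]; omega

lemma le_T (v : ℕ) : v ≤ T v := by
  induction v with
  | zero => simp
  | succ v ih =>
    have h : (Nat.digits 10 (v + 1)).length ≠ 0 := by
      rw [Ne, List.length_eq_zero_iff, Nat.digits_eq_nil_iff_eq_zero]; omega
    rw [T_succ]; omega

/-- The integer whose decimal representation is the concatenation of `1, 2, …, v`. -/
def concatNat : ℕ → ℕ
  | 0 => 0
  | v + 1 => concatNat v * 10 ^ (Nat.digits 10 (v + 1)).length + (v + 1)

lemma sum_range_eq_concatNat (v : ℕ) :
    ∑ m ∈ Finset.range (v + 1), (m : ℝ) / 10 ^ T m = concatNat v / 10 ^ T v := by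
  induction v with
  | zero => simp [concatNat]
  | succ v ih =>
    rw [Finset.sum_range_succ, ih, T_succ, concatNat, pow_add]
    push_cast
    field_simp

lemma antitone_concatNat_succ_div :
    Antitone fun v => ((concatNat v : ℝ) + 1) / 10 ^ T v := by
  refine antitone_nat_of_succ_le fun v => ?_
  have h : v + 1 < 10 ^ (Nat.digits 10 (v + 1)).length :=
    Nat.lt_base_pow_length_digits (by norm_num)
  have h' : (v : ℝ) + 1 + 1 ≤ 10 ^ (Nat.digits 10 (v + 1)).length := by exact_mod_cast h
  rw [T_succ, concatNat, pow_add, div_le_div_iff₀ (by positivity) (by positivity)]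
  push_cast
  have : (0 : ℝ) < 10 ^ T v := by positivity
  nlinarith

lemma sum_range_succ_le (v n : ℕ) :
    ∑ m ∈ Finset.range n, (m : ℝ) / 10 ^ T m ≤ (concatNat v + 1) / 10 ^ T v := by
  calc ∑ m ∈ Finset.range n, (m : ℝ) / 10 ^ T m
      ≤ ∑ m ∈ Finset.range (max n v + 1), (m : ℝ) / 10 ^ T m :=
        Finset.sum_le_sum_of_subset_of_nonneg
          (Finset.range_mono (by omega)) fun _ _ _ => by positivity
    _ = concatNat (max n v) / 10 ^ T (max n v) := sum_range_eq_concatNat _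
    _ ≤ (concatNat (max n v) + 1) / 10 ^ T (max n v) := by gcongr; linarith
    _ ≤ _ := antitone_concatNat_succ_div (le_max_right n v)

lemma champ_le (v : ℕ) : champ ≤ (concatNat v + 1) / 10 ^ T v :=
  Real.tsum_le_of_sum_range_le (fun _ => by positivity) (sum_range_succ_le v)

lemma le_champ (v : ℕ) : concatNat v / 10 ^ T v ≤ champ := by
  rw [← sum_range_eq_concatNat]
  exact (summable_of_sum_range_le (fun _ => by positivity) (sum_range_succ_le 0)).sum_le_tsum _
    fun _ _ => by positivity

lemma champ_lt (v : ℕ) : champ < (concatNat v + 1) / 10 ^ T v := by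
  have hv : v < 10 ^ v := Nat.lt_pow_self (by norm_num)
  obtain ⟨w, hw⟩ : ∃ w, 10 ^ v = w + 1 := ⟨10 ^ v - 1, by omega⟩
  have hlen : v + 1 ≤ (Nat.digits 10 (w + 1)).length := by
    rw [← hw, Nat.succ_le_iff, Nat.lt_digits_length_iff (by norm_num)]
  have hpow : w + 1 + 1 < 10 ^ (Nat.digits 10 (w + 1)).length :=
    calc w + 1 + 1 < 10 ^ (v + 1) := by rw [pow_succ]; omega
      _ ≤ _ := Nat.pow_le_pow_right (by norm_num) hlen
  have hpow' : (w : ℝ) + 1 + 1 < 10 ^ (Nat.digits 10 (w + 1)).length := by exact_mod_cast hpow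
  calc champ ≤ (concatNat (w + 1) + 1) / 10 ^ T (w + 1) := champ_le _
    _ < (concatNat w + 1) / 10 ^ T w := by
      rw [T_succ, concatNat, pow_add, div_lt_div_iff₀ (by positivity) (by positivity)]
      push_cast
      have : (0 : ℝ) < 10 ^ T w := by positivity
      nlinarith
    _ ≤ _ := antitone_concatNat_succ_div (show v ≤ w by omega)

lemma concatNat_mod {v j : ℕ} (hj : j ≤ (Nat.digits 10 v).length) :
    concatNat v % 10 ^ j = v % 10 ^ j := by
  cases v with
  | zero => simp [concatNat]
  | succ v =>
    obtain ⟨d, hd⟩ := pow_dvd_pow 10 hj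
    rw [concatNat, hd, show concatNat v * (10 ^ j * d) = 10 ^ j * (concatNat v * d) by ring,
      Nat.mul_add_mod]

lemma length_digits_le_T (v : ℕ) : (Nat.digits 10 v).length ≤ T v := by
  cases v with
  | zero => simp
  | succ v => rw [T_succ]; omega

/-- If the digit of `v` at place `10 ^ i` is `1`, then the shift of the Champernowne constant
that starts at this digit lies in `[1/10, 1/5)`. -/
lemma fract_shift_mem {v i : ℕ} (h : v / 10 ^ i % 10 = 1) (hi : i < (Nat.digits 10 v).length) :
    Int.fract (10 ^ (T v - i - 1) * champ) ∈ Set.Ico (1 / 10 : ℝ) (1 / 5) := by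
  have hT := length_digits_le_T v
  have hmod := concatNat_mod (v := v) (j := i + 1) hi
  have hdm := Nat.div_add_mod (concatNat v) (10 ^ (i + 1))
  rw [hmod] at hdm
  set q := concatNat v / 10 ^ (i + 1)
  have hs : v % 10 ^ (i + 1) = v % 10 ^ i + 10 ^ i := by
    rw [pow_succ, Nat.mod_mul, h, mul_one]
  have hlt : v % 10 ^ i < 10 ^ i := Nat.mod_lt _ (by positivity)
  have hlt' : ((v % 10 ^ i : ℕ) : ℝ) + 1 ≤ 10 ^ i := by exact_mod_cast hlt
  rw [hs] at hdm
  have hA : (concatNat v : ℝ) = 10 ^ i * 10 * q + ((v % 10 ^ i : ℕ) + 10 ^ i) := by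
    rw [← hdm, pow_succ]; push_cast; ring
  have h1 := le_champ v
  have h2 := champ_lt v
  have hTe : (10 : ℝ) ^ T v = 10 ^ (T v - i - 1) * (10 ^ i * 10) := by
    rw [← pow_succ, ← pow_add]; congr 1; omega
  rw [hTe, hA] at h1 h2
  have hP : (0 : ℝ) < 10 ^ (T v - i - 1) := by positivity
  have hQ : (0 : ℝ) < 10 ^ i := by positivity
  rw [div_le_iff₀ (by positivity)] at h1
  rw [lt_div_iff₀ (by positivity)] at h2
  set x : ℝ := 10 ^ (T v - i - 1) * champ with hx
  have h1' : (10 ^ i * 10 * q + ((v % 10 ^ i : ℕ) + 10 ^ i) : ℝ) ≤ 10 ^ i * (10 * x) := by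
    rw [hx]; linarith
  have h2' : (10 : ℝ) ^ i * (10 * x) < 10 ^ i * 10 * q + ((v % 10 ^ i : ℕ) + 10 ^ i) + 1 := by
    rw [hx]; linarith
  have hlow : (q : ℝ) + 1 / 10 ≤ x := by
    have : (10 : ℝ) ^ i * (10 * q + 1) ≤ 10 ^ i * (10 * x) := by
      have : (0 : ℝ) ≤ (v % 10 ^ i : ℕ) := by positivity
      linarith
    have := le_of_mul_le_mul_left this hQ
    linarith
  have hupp : x < (q : ℝ) + 1 / 5 := by
    have : (10 : ℝ) ^ i * (10 * x) < 10 ^ i * (10 * q + 2) := by linarith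
    have := lt_of_mul_lt_mul_left this hQ.le
    linarith
  have hfl : ⌊x⌋ = (q : ℤ) := by
    rw [Int.floor_eq_iff]; push_cast; constructor <;> linarith
  rw [Int.fract, hfl]
  push_cast
  constructor <;> linarith

/-- Insert the digit `1` into `x` at place `10 ^ i`. -/
def insertOne (x i : ℕ) : ℕ := 10 ^ i * (10 * (x / 10 ^ i) + 1) + x % 10 ^ i

lemma insertOne_div (x i : ℕ) : insertOne x i / 10 ^ i = 10 * (x / 10 ^ i) + 1 := by
  have hlt : x % 10 ^ i < 10 ^ i := Nat.mod_lt _ (by positivity)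
  rw [insertOne, Nat.mul_add_div (by positivity), Nat.div_eq_of_lt hlt, add_zero]

lemma insertOne_mod (x i : ℕ) : insertOne x i % 10 ^ i = x % 10 ^ i := by
  rw [insertOne, Nat.mul_add_mod, Nat.mod_mod]

lemma insertOne_injective (i : ℕ) : Function.Injective (insertOne · i) := by
  intro x y h
  have hd := congrArg (· / 10 ^ i) h
  have hm := congrArg (· % 10 ^ i) h
  simp only [insertOne_div, insertOne_mod] at hd hm
  rw [← Nat.div_add_mod x (10 ^ i), ← Nat.div_add_mod y (10 ^ i), hm,
    show x / 10 ^ i = y / 10 ^ i by omega]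

lemma lt_length_digits_insertOne (x i : ℕ) : i < (Nat.digits 10 (insertOne x i)).length := by
  rw [Nat.lt_digits_length_iff (by norm_num), insertOne]
  nlinarith [Nat.zero_le (x / 10 ^ i), Nat.zero_le (x % 10 ^ i), 
    Nat.pow_pos (n := i) (show 0 < 10 by norm_num)]

lemma insertOne_lt {x i k : ℕ} (hi : i ≤ k) (hx : x < 10 ^ k) : insertOne x i < 10 ^ (k + 1) := by
  obtain ⟨d, rfl⟩ := Nat.exists_eq_add_of_le hi
  have hq : x / 10 ^ i < 10 ^ d := Nat.div_lt_of_lt_mul (by rwa [← pow_add])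
  rw [show i + d + 1 = i + (d + 1) by ring, pow_add, mul_comm, ← Nat.div_lt_iff_lt_mul (by positivity),
    insertOne_div, pow_succ]
  omega

lemma T_sub_inj {v w i j : ℕ} (hi : i < (Nat.digits 10 v).length)
    (hj : j < (Nat.digits 10 w).length) (h : T v - i = T w - j) : v = w ∧ i = j := by
  have key : ∀ {v w i j : ℕ}, i < (Nat.digits 10 v).length → j < (Nat.digits 10 w).length →
      v < w → T v - i < T w - j := by
    intro v w i j _ hj hvw
    obtain ⟨u, rfl⟩ : ∃ u, w = u + 1 := ⟨w - 1, by omega⟩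
    have := T_mono (show v ≤ u by omega)
    rw [T_succ]; omega
  rcases lt_trichotomy v w with hvw | rfl | hvw
  · have := key hi hj hvw; omega
  · have := length_digits_le_T v
    exact ⟨rfl, by omega⟩
  · have := key hj hi hvw; omega

lemma card_filter_fract_ge (k : ℕ) :
    (k + 1) * 10 ^ k ≤ ((Finset.Icc 1 (T (10 ^ (k + 1) - 1))).filter fun n =>
      Int.fract (10 ^ (n - 1) * champ) ∈ Set.Ico (1 / 10 : ℝ) (1 / 5)).card := by
  have hcard : (Finset.range (k + 1) ×ˢ Finset.range (10 ^ k)).card = (k + 1) * 10 ^ k := by simp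
  rw [← hcard]
  refine Finset.card_le_card_of_injOn (fun p => T (insertOne p.2 p.1) - p.1) ?_ ?_
  · rintro ⟨i, x⟩ hp
    simp only [Finset.coe_product, Finset.coe_range, Set.mem_prod, Set.mem_Iio] at hp
    have hlen := lt_length_digits_insertOne x i
    have hT := length_digits_le_T (insertOne x i)
    have hlt := insertOne_lt (show i ≤ k by omega) hp.2
    have hle := T_mono (show insertOne x i ≤ 10 ^ (k + 1) - 1 by omega)
    have hdig : insertOne x i / 10 ^ i % 10 = 1 := by rw [insertOne_div]; omega
    simp only [Finset.coe_filter, Finset.mem_Icc, Set.mem_ofPred_eq]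
    exact ⟨⟨by omega, by omega⟩, fract_shift_mem hdig hlen⟩
  · rintro ⟨i, x⟩ _ ⟨j, y⟩ _ h
    obtain ⟨h1, rfl⟩ :=
      T_sub_inj (lt_length_digits_insertOne x i) (lt_length_digits_insertOne y j) h
    rw [insertOne_injective i h1]

lemma T_pow_sub_one_le (k : ℕ) : T (10 ^ (k + 1) - 1) + 10 ^ k ≤ (k + 1) * 10 ^ (k + 1) := by
  have hpos : 0 < 10 ^ k := by positivity
  have hk : 10 ^ (k + 1) = 10 * 10 ^ k := by ring
  have hT : T (10 ^ (k + 1) - 1) = ∑ j ∈ Finset.range (10 ^ (k + 1)), (Nat.digits 10 j).length := by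
    symm
    refine (Finset.sum_subset_zero_on_sdiff ?_ ?_ fun _ _ => rfl).symm
    · intro j hj
      simp only [Finset.mem_Icc, Finset.mem_range] at *
      omega
    · intro j hj
      simp only [Finset.mem_sdiff, Finset.mem_Icc, Finset.mem_range] at hj
      rw [show j = 0 by omega]
      simp
  have h1 : ∑ j ∈ Finset.range (10 ^ k), (Nat.digits 10 j).length ≤ 10 ^ k * k := by
    simpa using Finset.sum_le_card_nsmul (Finset.range (10 ^ k)) _ k fun j hj =>
      (Nat.digits_length_le_iff (by norm_num) j).2 (Finset.mem_range.1 hj)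
  have h2 : ∑ j ∈ Finset.Ico (10 ^ k) (10 ^ (k + 1)), (Nat.digits 10 j).length
      ≤ (10 ^ (k + 1) - 10 ^ k) * (k + 1) := by
    simpa using Finset.sum_le_card_nsmul (Finset.Ico (10 ^ k) (10 ^ (k + 1))) _ (k + 1)
      fun j hj => (Nat.digits_length_le_iff (by norm_num) j).2 (Finset.mem_Ico.1 hj).2
  rw [hT, ← Finset.sum_range_add_sum_Ico _ (show 10 ^ k ≤ 10 ^ (k + 1) by omega)]
  rw [hk, show 10 * 10 ^ k - 10 ^ k = 9 * 10 ^ k by omega] at h2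
  rw [hk]
  nlinarith

lemma le_discSeq (x : ℕ → ℝ) (N : ℕ) {a b : ℝ} (ha : 0 ≤ a) (hab : a < b) (hb : b < 1) :
    (((Finset.Icc 1 N).filter fun n => x n ∈ Set.Ico a b).card : ℝ) / N - (b - a)
      ≤ discSeq x N := by
  refine (le_abs_self _).trans (le_csSup ⟨1, ?_⟩ ⟨a, b, ha, hab, hb, rfl⟩)
  rintro d ⟨a, b, ha, hab, hb, rfl⟩
  have h0 : 0 ≤ (((Finset.Icc 1 N).filter fun n => x n ∈ Set.Ico a b).card : ℝ) / N := by
    positivity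
  have h1 : (((Finset.Icc 1 N).filter fun n => x n ∈ Set.Ico a b).card : ℝ) / N ≤ 1 := by
    refine div_le_one_of_le₀ ?_ (by positivity)
    have := Finset.card_filter_le (Finset.Icc 1 N) fun n => x n ∈ Set.Ico a b
    rw [Nat.card_Icc, Nat.add_sub_cancel] at this
    exact_mod_cast this
  rw [abs_le]
  constructor <;> linarith

lemma one_div_le_D_champ (k : ℕ) :
    1 / (100 * (k + 1)) ≤ D champ (T (10 ^ (k + 1) - 1)) := by
  have hD := le_discSeq (fun n => Int.fract (10 ^ (n - 1) * champ)) (T (10 ^ (k + 1) - 1))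
    (a := 1 / 10) (b := 1 / 5) (by norm_num) (by norm_num) (by norm_num)
  refine le_trans ?_ hD
  have hc := Nat.cast_le (α := ℝ).2 (card_filter_fract_ge k)
  push_cast at hc
  have hN : (T (10 ^ (k + 1) - 1) : ℝ) + 10 ^ k ≤ (k + 1) * (10 * 10 ^ k) := by
    have h := T_pow_sub_one_le k
    rw [pow_succ'] at h
    rw [pow_succ']
    exact_mod_cast h
  have hpos : (0 : ℝ) < T (10 ^ (k + 1) - 1) := by
    have := le_T (10 ^ (k + 1) - 1)
    have : 1 < 10 ^ (k + 1) := Nat.one_lt_pow (by omega) (by norm_num)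
    exact_mod_cast (by omega : 0 < T (10 ^ (k + 1) - 1))
  refine le_trans ?_ (sub_le_sub_right (div_le_div_of_nonneg_right hc hpos.le) _)
  generalize (T (10 ^ (k + 1) - 1) : ℝ) = N at *
  have hP : (0 : ℝ) < 10 ^ k := by positivity
  have hk : (0 : ℝ) < k + 1 := by positivity
  generalize (10 : ℝ) ^ k = P at *
  generalize (k : ℝ) + 1 = r at *
  rw [le_sub_iff_add_le, le_div_iff₀ hpos]
  have h : N / r ≤ 10 * P := by
    rw [div_le_iff₀ hk]; nlinarith
  have : (1 / (100 * r) + (1 / 5 - 1 / 10)) * N = N / r / 100 + N / 10 := by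
    field_simp; ring
  rw [this]
  linarith

/-- For infinitely many `N`, the discrepancy of the Champernowne constant satisfies
`D(c, N) > 1 / (3 · 10³ · log N)`. -/
theorem champernowne_discrepancy_lower :
    ∀ m : ℕ, ∃ N : ℕ, m ≤ N ∧ D champ N > 1 / (3 * 10 ^ 3 * Real.log N) := by
  intro m
  have hle : 2 ^ (m + 1) ≤ T (10 ^ (m + 1) - 1) := by
    refine le_trans ?_ (le_T _)
    have h1 : 2 ^ m ≤ 10 ^ m := Nat.pow_le_pow_left (by norm_num) m
    have h2 : 0 < 10 ^ m := by positivity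
    rw [pow_succ, pow_succ]
    omega
  refine ⟨T (10 ^ (m + 1) - 1), ?_, lt_of_lt_of_le ?_ (one_div_le_D_champ m)⟩
  · have : m + 1 < 2 ^ (m + 1) := Nat.lt_two_pow_self
    omega
  · have hlog : (m + 1) * Real.log 2 ≤ Real.log (T (10 ^ (m + 1) - 1)) := by
      have := Real.log_le_log (x := (2 : ℝ) ^ (m + 1)) (by positivity)
        (y := (T (10 ^ (m + 1) - 1) : ℝ)) (by exact_mod_cast hle)
      rw [Real.log_pow] at this
      exact_mod_cast this
    have h2 := Real.log_two_gt_d9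
    have hm : (0 : ℝ) < m + 1 := by positivity
    refine one_div_lt_one_div_of_lt (by positivity) ?_
    nlinarith
end

section
/- Let k ≥ 2 and let B = (b₁,…,b_k) be a digit block with b₂ ≠ 0 and b₁ ≠ 9. Then for every ℓ ≥ k, occ_o(B, s_ℓ) ≥ 10^{ℓ−k}: for each of the 10^{ℓ−k} integers m with ℓ digits whose first k−1 digits are (b₂,…,b_k) and whose last digit is b₁, the block B occurs straddling the boundary between m and m+1 in the string s_ℓ. -/
open scoped Classical

/-- Every sequence of `n` decimal digits is the digit expansion, read from the left and padded with
zeros, of some `P < 10 ^ n`. -/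
theorem exists_lt_pow_div_pow_mod_eq (f : ℕ → ℕ) (hf : ∀ i, f i < 10) (n : ℕ) :
    ∃ P < 10 ^ n, ∀ i < n, P / 10 ^ (n - 1 - i) % 10 = f i := by
  induction n with
  | zero => exact ⟨0, by simp, by simp⟩
  | succ n ih =>
    obtain ⟨P, hP, hd⟩ := ih
    have hfn := hf n
    refine ⟨P * 10 + f n, by rw [pow_succ]; omega, fun i hi => ?_⟩
    rcases Nat.lt_succ_iff_lt_or_eq.mp hi with h | rfl
    · rw [← hd i h, show n + 1 - 1 - i = (n - 1 - i) + 1 by omega, pow_succ', ← Nat.div_div_eq_div_mul]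
      congr 2
      omega
    · simp only [Nat.add_sub_cancel, Nat.sub_self, pow_zero, Nat.div_one]
      omega

/-- If `B = (b₁, …, b_k)` has `k ≥ 2`, `b₂ ≠ 0` and `b₁ ≠ 9`, then for every `ℓ ≥ k`
the number of occurrences of `B` in `s_ℓ` straddling a boundary between two
consecutive `ℓ`-digit terms satisfies `occ_o(B, s_ℓ) ≥ 10^{ℓ−k}`. -/
theorem occOSeg_lower (k ℓ : ℕ) (hk : 2 ≤ k) (B : Fin k → Fin 10)
    (hb₂ : (B ⟨1, by omega⟩ : ℕ) ≠ 0) (hb₁ : (B ⟨0, by omega⟩ : ℕ) ≠ 9)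
    (hℓ : k ≤ ℓ) :
    10 ^ (ℓ - k) ≤ occOSeg B ℓ := by
  obtain ⟨P, hP, hd⟩ := exists_lt_pow_div_pow_mod_eq
    (fun i => if h : i + 1 < k then (B ⟨i + 1, h⟩ : ℕ) else 0)
    (fun i => by split_ifs <;> omega) (k - 1)
  have hP_ge : 10 ^ (k - 2) ≤ P := by
    by_contra! h
    have h0 := hd 0 (by omega)
    rw [dif_pos (by omega), show k - 1 - 1 - 0 = k - 2 by omega, Nat.div_eq_of_lt h] at h0
    exact hb₂ h0.symm
  set b : ℕ := (B ⟨0, by omega⟩ : ℕ) with hb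
  have hb_lt : b < 9 := by omega
  set Q : ℕ := 10 ^ (ℓ - k) with hQ
  have hlow : 10 ^ (ℓ - 1) = 10 ^ (k - 2) * (10 * Q) := by
    rw [hQ, ← pow_succ', ← pow_add]; congr 1; omega
  have hhigh : 10 ^ ℓ = 10 ^ (k - 1) * (10 * Q) := by
    rw [hQ, ← pow_succ', ← pow_add]; congr 1; omega
  have hge := Nat.mul_le_mul_right (10 * Q) hP_ge
  have hle := Nat.mul_le_mul_right (10 * Q) (Nat.succ_le_of_lt hP)
  rw [Nat.succ_mul] at hle
  rw [← Finset.card_range Q, occOSeg]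
  refine Finset.card_le_card_of_injOn (fun t => (P * (10 * Q) + (t * 10 + b), 1)) ?_ ?_
  · intro t ht
    replace ht : t < Q := by simpa using ht
    simp only [Finset.coe_filter, Finset.mem_product, Finset.mem_Ico, Set.mem_ofPred_eq]
    refine ⟨⟨⟨by omega, by omega⟩, by omega, by omega⟩, ?_, ?_⟩
    · rintro ⟨i, hik⟩ hi
      obtain rfl : i = 0 := by simpa using hi
      simp only [Nat.sub_self, pow_zero, Nat.div_one, ← hb, Nat.mul_left_comm P 10 Q]
      omega
    · rintro ⟨i, hik⟩ hi
      replace hi : 1 ≤ i := hi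
      have h1 := hd (i - 1) (by omega)
      simp only [Nat.sub_add_cancel hi, dif_pos hik] at h1
      rw [← h1, show ℓ - 1 - (i - 1) = (ℓ - k + 1) + (k - 1 - 1 - (i - 1)) by omega, pow_add,
        pow_succ', ← hQ, ← Nat.div_div_eq_div_mul]
      congr 2
      rw [add_assoc, mul_comm P, Nat.mul_add_div (by omega), Nat.div_eq_of_lt (by omega), add_zero]
  · intro s _ t _ h
    simp only [Prod.mk.injEq] at h
    omega
end

section
/- There exists a constant C > 0 such that for every h ≥ 1 there is a threshold N₀(h) with the following property: for every γ ∈ [0,1) with 10^h·γ ∈ ℤ and every N ≥ N₀(h), | #{n : 1 ≤ n ≤ N and 10^{n−1}c mod 1 ∈ [0, γ)}/N − γ | ≤ C/log N. In particular the constant C does not depend on γ or on h. -/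
open scoped Classical

lemma one_le_digits_length_succ (v : ℕ) : 1 ≤ (Nat.digits 10 (v + 1)).length :=
  (Nat.lt_digits_length_iff (by norm_num) (v + 1) (k := 0)).2 (by simp)

lemma term_le_sub (m : ℕ) :
    ((m + 1 : ℕ) : ℝ) / 10 ^ T (m + 1) ≤ 1 / 10 ^ T m - 1 / 10 ^ T (m + 1) := by
  have h : m + 1 < 10 ^ (Nat.digits 10 (m + 1)).length := Nat.lt_base_pow_length_digits (by norm_num)
  have h' : ((m + 1 : ℕ) : ℝ) + 1 ≤ 10 ^ (Nat.digits 10 (m + 1)).length := by exact_mod_cast h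
  rw [T_succ, pow_add]
  rw [le_sub_iff_add_le, ← add_div, div_le_div_iff₀ (by positivity) (by positivity)]
  have : (0 : ℝ) < 10 ^ T m := by positivity
  nlinarith

lemma term_lt_sub_of_odd {m : ℕ} (hm : Odd m) :
    ((m + 1 : ℕ) : ℝ) / 10 ^ T (m + 1) < 1 / 10 ^ T m - 1 / 10 ^ T (m + 1) := by
  have h : m + 1 < 10 ^ (Nat.digits 10 (m + 1)).length := Nat.lt_base_pow_length_digits (by norm_num)
  have hl := one_le_digits_length_succ m
  have he : Even (10 ^ (Nat.digits 10 (m + 1)).length) :=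
    Even.pow_of_ne_zero (by decide) (by omega)
  have h1 : m + 1 + 1 < 10 ^ (Nat.digits 10 (m + 1)).length := by
    rcases hm with ⟨a, rfl⟩
    rcases he with ⟨b, hb⟩
    omega
  have h' : ((m + 1 : ℕ) : ℝ) + 1 < 10 ^ (Nat.digits 10 (m + 1)).length := by exact_mod_cast h1
  rw [T_succ, pow_add]
  rw [lt_sub_iff_add_lt, ← add_div, div_lt_div_iff₀ (by positivity) (by positivity)]
  have : (0 : ℝ) < 10 ^ T m := by positivity
  nlinarith

lemma hasSum_telescoping (y : ℕ) :
    HasSum (fun i => (1 : ℝ) / 10 ^ T (i + y) - 1 / 10 ^ T (i + y + 1)) (1 / 10 ^ T y) := by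
  rw [hasSum_iff_tendsto_nat_of_nonneg]
  · have h : ∀ n, ∑ i ∈ Finset.range n, ((1 : ℝ) / 10 ^ T (i + y) - 1 / 10 ^ T (i + y + 1))
        = 1 / 10 ^ T y - (1 / 10) ^ T (n + y) := by
      intro n
      have := Finset.sum_range_sub' (fun i => (1 : ℝ) / 10 ^ T (i + y)) n
      simp only [zero_add] at this
      rw [div_pow, one_pow, ← this]
      refine Finset.sum_congr rfl fun i _ => ?_
      rw [add_right_comm]
    simp_rw [h]
    have hT : Filter.Tendsto (fun n => T (n + y)) Filter.atTop Filter.atTop :=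
      Filter.tendsto_atTop_mono (fun n => (Nat.le_add_right n y).trans (le_T _)) Filter.tendsto_id
    have := (tendsto_pow_atTop_nhds_zero_of_lt_one (r := (1 / 10 : ℝ))
      (by norm_num) (by norm_num)).comp hT
    simpa using this.const_sub (1 / 10 ^ T y : ℝ)
  · intro i
    exact le_trans (by positivity) (term_le_sub (i + y))

lemma summable_tail (y : ℕ) :
    Summable fun i : ℕ => ((i + y + 1 : ℕ) : ℝ) / 10 ^ T (i + y + 1) :=
  Summable.of_nonneg_of_le (fun i => by positivity) (fun i => term_le_sub (i + y))
    (hasSum_telescoping y).summable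

lemma tail_lt (y : ℕ) :
    ∑' i : ℕ, ((i + y + 1 : ℕ) : ℝ) / 10 ^ T (i + y + 1) < 1 / 10 ^ T y := by
  rw [← (hasSum_telescoping y).tsum_eq]
  exact (summable_tail y).tsum_lt_tsum (i := y + 1) (fun i => term_le_sub (i + y))
    (term_lt_sub_of_odd ⟨y, by ring⟩) (hasSum_telescoping y).summable

lemma champ_eq (y : ℕ) :
    champ = ∑ m ∈ Finset.range (y + 1), (m : ℝ) / 10 ^ T m
      + ∑' i : ℕ, ((i + y + 1 : ℕ) : ℝ) / 10 ^ T (i + y + 1) := by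
  have hs : Summable fun m : ℕ => (m : ℝ) / 10 ^ T m :=
    (summable_nat_add_iff (y + 1)).1 (summable_tail y)
  exact (hs.sum_add_tsum_nat_add (y + 1)).symm

/-- Reading the expansion from the last `t` digits of the term `y` onwards, the first `t`
digits seen are those of `y % 10 ^ t`. -/
lemma fract_champ_bounds {y t : ℕ} (ht : t ≤ (Nat.digits 10 y).length) :
    ((y % 10 ^ t : ℕ) : ℝ) ≤ 10 ^ t * Int.fract (10 ^ (T y - t) * champ) ∧
      10 ^ t * Int.fract (10 ^ (T y - t) * champ) < ((y % 10 ^ t : ℕ) : ℝ) + 1 := by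
  rcases y with _ | y
  · have : t = 0 := by simpa using ht
    subst this
    simpa using Int.fract_lt_one _
  have htT : t ≤ T (y + 1) := by rw [T_succ]; omega
  set r : ℝ := 10 ^ T (y + 1) *
    ∑' i : ℕ, ((i + (y + 1) + 1 : ℕ) : ℝ) / 10 ^ T (i + (y + 1) + 1) with hr
  have hr0 : 0 ≤ r := mul_nonneg (by positivity) (tsum_nonneg fun i => by positivity)
  have hr1 : r < 1 := by
    have := mul_lt_mul_of_pos_left (tail_lt (y + 1)) (show (0 : ℝ) < 10 ^ T (y + 1) by positivity)
    rwa [mul_one_div_cancel (by positivity)] at this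
  set A : ℕ := ∑ m ∈ Finset.range (y + 1), m * 10 ^ (T (y + 1) - t - T m) with hA
  have key : (10 : ℝ) ^ (T (y + 1) - t) * champ = A + (((y + 1 : ℕ) : ℝ) + r) / 10 ^ t := by
    rw [champ_eq (y + 1), Finset.sum_range_succ, hr, hA, pow_sub₀ _ (by norm_num) htT]
    push_cast
    have : ∀ m ∈ Finset.range (y + 1), (m : ℝ) * 10 ^ (T (y + 1) - t - T m)
        = 10 ^ T (y + 1) * (10 ^ t)⁻¹ * (m / 10 ^ T m) := by
      intro m hm
      have hm' : T m ≤ T y := T_mono (by simpa [Nat.lt_succ_iff] using hm)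
      have : T m ≤ T (y + 1) - t := by rw [T_succ]; omega
      rw [pow_sub₀ _ (by norm_num) this, pow_sub₀ _ (by norm_num) htT]
      field_simp
    rw [Finset.sum_congr rfl this, ← Finset.mul_sum]
    field_simp
    ring
  have hpos : (0 : ℝ) < 10 ^ t := by positivity
  have hdm : ((y + 1 : ℕ) : ℝ)
      = 10 ^ t * ((y + 1) / 10 ^ t : ℕ) + ((y + 1) % 10 ^ t : ℕ) := by
    exact_mod_cast (Nat.div_add_mod (y + 1) (10 ^ t)).symm
  have hlt : (((y + 1) % 10 ^ t : ℕ) : ℝ) + 1 ≤ 10 ^ t := by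
    exact_mod_cast Nat.mod_lt (y + 1) (by positivity : 0 < 10 ^ t)
  have hfract : Int.fract ((10 : ℝ) ^ (T (y + 1) - t) * champ)
      = ((((y + 1) % 10 ^ t : ℕ) : ℝ) + r) / 10 ^ t := by
    rw [Int.fract_eq_iff]
    refine ⟨by positivity, by rw [div_lt_one hpos]; linarith,
      ((A + (y + 1) / 10 ^ t : ℕ) : ℤ), ?_⟩
    rw [key, hdm, Int.cast_natCast, Nat.cast_add]
    field_simp
    ring
  rw [hfract, mul_div_cancel₀ _ hpos.ne']
  constructor <;> linarith

lemma card_filter_mod_lt {m K : ℕ} (hK : K ≤ m) (a : ℕ) :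
    ((Finset.Ico a (a + m)).filter fun y => y % m < K).card = K := by
  rw [Nat.filter_Ico_card_eq_of_periodic a m (fun y => y % m < K)
    (fun y => by simp), Nat.count_eq_card_filter_range]
  have : (Finset.range m).filter (fun y => y % m < K) = Finset.range K := by
    ext y
    simp only [Finset.mem_filter, Finset.mem_range]
    constructor
    · rintro ⟨h1, h2⟩
      rwa [Nat.mod_eq_of_lt h1] at h2
    · intro h
      have : y < m := by omega
      exact ⟨this, by rwa [Nat.mod_eq_of_lt this]⟩
  rw [this, Finset.card_range]

/-- The centred indicator of `[0, γ)`. -/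
noncomputable def centred (γ x : ℝ) : ℝ := (if x < γ then 1 else 0) - γ

lemma abs_centred_le {γ : ℝ} (h0 : 0 ≤ γ) (h1 : γ < 1) (x : ℝ) : |centred γ x| ≤ 1 := by
  unfold centred
  rw [abs_le]
  split_ifs <;> constructor <;> linarith

lemma abs_sum_centred_period_le {γ : ℝ} (h0 : 0 ≤ γ) (h1 : γ < 1) {m : ℕ} (hm : 0 < m)
    {x : ℕ → ℝ} {a : ℕ}
    (hx : ∀ y ∈ Finset.Ico a (a + m), ((y % m : ℕ) : ℝ) ≤ m * x y ∧ m * x y < (y % m : ℕ) + 1) :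
    |∑ y ∈ Finset.Ico a (a + m), centred γ (x y)| ≤ 1 := by
  have hm' : (0 : ℝ) < m := by exact_mod_cast hm
  have hsum : ∑ y ∈ Finset.Ico a (a + m), centred γ (x y)
      = (((Finset.Ico a (a + m)).filter fun y => x y < γ).card : ℝ) - m * γ := by
    simp [centred, Finset.sum_sub_distrib]
  have hup : ((Finset.Ico a (a + m)).filter fun y => x y < γ).card ≤ ⌈m * γ⌉₊ := by
    refine le_trans (Finset.card_le_card ?_)
      (card_filter_mod_lt (m := m) (K := ⌈m * γ⌉₊) ?_ a).le
    · intro y hy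
      rw [Finset.mem_filter] at hy ⊢
      refine ⟨hy.1, Nat.lt_ceil.2 ((hx y hy.1).1.trans_lt ?_)⟩
      exact mul_lt_mul_of_pos_left hy.2 hm'
    · exact Nat.ceil_le.2 (by nlinarith)
  have hlo : ⌊m * γ⌋₊ ≤ ((Finset.Ico a (a + m)).filter fun y => x y < γ).card := by
    refine le_trans (card_filter_mod_lt (m := m) (K := ⌊m * γ⌋₊) ?_ a).ge
      (Finset.card_le_card ?_)
    · exact Nat.floor_le_of_le (by nlinarith)
    · intro y hy
      rw [Finset.mem_filter] at hy ⊢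
      refine ⟨hy.1, ?_⟩
      have h2 : ((y % m : ℕ) : ℝ) + 1 ≤ ⌊m * γ⌋₊ := by exact_mod_cast hy.2
      have h3 : (⌊m * γ⌋₊ : ℝ) ≤ m * γ := Nat.floor_le (by positivity)
      have := (hx y hy.1).2
      exact lt_of_mul_lt_mul_left (by linarith) hm'.le
  have hup' : (((Finset.Ico a (a + m)).filter fun y => x y < γ).card : ℝ) ≤ ⌈m * γ⌉₊ := by
    exact_mod_cast hup
  have hlo' : (⌊m * γ⌋₊ : ℝ) ≤ ((Finset.Ico a (a + m)).filter fun y => x y < γ).card := by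
    exact_mod_cast hlo
  have h2 := Nat.ceil_lt_add_one (show 0 ≤ m * γ by positivity)
  have h3 := Nat.lt_floor_add_one (m * γ)
  rw [hsum, abs_le]
  constructor <;> linarith

lemma abs_sum_le_card {f : ℕ → ℝ} (hf : ∀ y, |f y| ≤ 1) (s : Finset ℕ) :
    |∑ y ∈ s, f y| ≤ s.card :=
  (Finset.abs_sum_le_sum_abs _ _).trans
    ((Finset.sum_le_sum fun y _ => hf y).trans (by simp))

lemma abs_sum_Ico_le {f : ℕ → ℝ} (hf : ∀ y, |f y| ≤ 1) {m : ℕ} (hm : 0 < m) {a₀ : ℕ}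
    (hper : ∀ a, a₀ ≤ a → |∑ y ∈ Finset.Ico a (a + m), f y| ≤ 1) (R : ℕ) :
    ∀ a, a₀ ≤ a → |∑ y ∈ Finset.Ico a (a + R), f y| ≤ R / m + m := by
  have hm' : (0 : ℝ) < m := by exact_mod_cast hm
  induction R using Nat.strong_induction_on with
  | _ R ih =>
    intro a ha
    rcases lt_or_ge R m with hR | hR
    · have h1 := abs_sum_le_card hf (Finset.Ico a (a + R))
      rw [Nat.card_Ico, Nat.add_sub_cancel_left] at h1
      have h2 : (R : ℝ) < m := by exact_mod_cast hR
      have h3 : 0 ≤ (R : ℝ) / m := by positivity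
      linarith
    · have h1 := ih (R - m) (by omega) (a + m) (by omega)
      rw [show a + m + (R - m) = a + R by omega, Nat.cast_sub hR, sub_div, div_self hm'.ne'] at h1
      rw [← Finset.sum_Ico_consecutive f (show a ≤ a + m by omega) (show a + m ≤ a + R by omega)]
      have := abs_add_le (∑ y ∈ Finset.Ico a (a + m), f y) (∑ y ∈ Finset.Ico (a + m) (a + R), f y)
      have := hper a ha
      linarith

lemma sum_range_T (f : ℕ → ℝ) (V : ℕ) :
    ∑ n ∈ Finset.range (T V), f n = ∑ t ∈ Finset.range (Nat.digits 10 V).length,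
      ∑ y ∈ Finset.Ico (10 ^ t) (V + 1), f (T y - (t + 1)) := by
  have h1 : ∑ n ∈ Finset.range (T V), f n = ∑ y ∈ Finset.Ico 1 (V + 1),
      ∑ t ∈ Finset.range (Nat.digits 10 y).length, f (T y - (t + 1)) := by
    induction V with
    | zero => simp [T_zero]
    | succ V ih =>
      rw [Finset.sum_Ico_succ_top (by omega), ← ih, T_succ, Finset.sum_range_add,
        ← Finset.sum_range_reflect (fun i => f (T V + i))]
      congr 1
      refine Finset.sum_congr rfl fun t ht => ?_
      rw [Finset.mem_range] at ht
      congr 1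
      omega
  rw [h1]
  refine Finset.sum_comm' fun y t => ?_
  simp only [Finset.mem_Ico, Finset.mem_range, Nat.lt_digits_length_iff (b := 10) (by norm_num)]
  constructor
  · rintro ⟨⟨hy1, hy2⟩, ht⟩
    exact ⟨⟨ht, hy2⟩, by omega⟩
  · rintro ⟨⟨ht, hy2⟩, -⟩
    exact ⟨⟨(Nat.one_le_pow _ _ (by norm_num)).trans ht, hy2⟩, ht⟩

lemma pow_digits_length_le {V : ℕ} (hV : 1 ≤ V) :
    (10 : ℝ) ^ (Nat.digits 10 V).length ≤ 10 * V := by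
  exact_mod_cast Nat.base_pow_length_digits_le 10 V (by norm_num) (by omega)

lemma sum_range_pow_le (L : ℕ) : ∑ t ∈ Finset.range L, (10 : ℝ) ^ t ≤ 10 ^ L / 5 := by
  induction L with
  | zero => norm_num
  | succ L ih =>
    rw [Finset.sum_range_succ, pow_succ]
    have : (0 : ℝ) < 10 ^ L := by positivity
    linarith

lemma sum_range_inv_pow_le (L : ℕ) : ∑ t ∈ Finset.range L, ((10 : ℝ) ^ (t + 1))⁻¹ ≤ 1 := by
  have : ∑ t ∈ Finset.range L, ((10 : ℝ) ^ (t + 1))⁻¹ ≤ 1 - (10 ^ L)⁻¹ := by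
    induction L with
    | zero => norm_num
    | succ L ih =>
      rw [Finset.sum_range_succ, pow_succ, mul_inv]
      have : (0 : ℝ) < (10 ^ L)⁻¹ := by positivity
      linarith
  have : (0 : ℝ) < (10 ^ L)⁻¹ := by positivity
  linarith

lemma mul_digits_length_le_T {V : ℕ} (hV : 1 ≤ V) :
    (V : ℝ) * (Nat.digits 10 V).length ≤ 3 * T V := by
  set L := (Nat.digits 10 V).length with hL
  have h := sum_range_T (fun _ => 1) V
  have h1 : ∀ t ∈ Finset.range L, (V : ℝ) - 10 ^ t ≤ ∑ _y ∈ Finset.Ico (10 ^ t) (V + 1), (1 : ℝ) := by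
    intro t ht
    have h2 : 10 ^ t ≤ V := (Nat.lt_digits_length_iff (by norm_num) V).1 (Finset.mem_range.1 ht)
    rw [Finset.sum_const, Nat.card_Ico, nsmul_eq_mul, mul_one, Nat.cast_sub (by omega)]
    push_cast
    linarith
  have h3 := Finset.sum_le_sum h1
  rw [← h, Finset.sum_sub_distrib] at h3
  simp only [Finset.sum_const, Finset.card_range, nsmul_eq_mul, mul_one] at h3
  have h4 := sum_range_pow_le L
  have h5 := pow_digits_length_le hV
  have h6 : (V : ℝ) ≤ T V := by exact_mod_cast le_T V
  linarith

lemma abs_sum_centred_T_le {γ : ℝ} (h0 : 0 ≤ γ) (h1 : γ < 1) {V : ℕ} (hV : 1 ≤ V) :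
    |∑ n ∈ Finset.range (T V), centred γ (Int.fract (10 ^ n * champ))| ≤ 21 * V := by
  set L := (Nat.digits 10 V).length with hL
  rw [sum_range_T]
  have hb : ∀ t ∈ Finset.range L, |∑ y ∈ Finset.Ico (10 ^ t) (V + 1),
      centred γ (Int.fract (10 ^ (T y - (t + 1)) * champ))|
      ≤ V * ((10 : ℝ) ^ (t + 1))⁻¹ + 10 * 10 ^ t := by
    intro t ht
    have h2 : 10 ^ t ≤ V := (Nat.lt_digits_length_iff (by norm_num) V).1 (Finset.mem_range.1 ht)
    have h3 := abs_sum_Ico_le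
      (f := fun y => centred γ (Int.fract (10 ^ (T y - (t + 1)) * champ)))
      (fun y => abs_centred_le h0 h1 _) (m := 10 ^ (t + 1)) (by positivity) (a₀ := 10 ^ t)
      (fun a ha => abs_sum_centred_period_le h0 h1 (by positivity) fun y hy => by
        have hy' : 10 ^ t ≤ y := ha.trans (Finset.mem_Ico.1 hy).1
        have := fract_champ_bounds (y := y) (t := t + 1)
          ((Nat.lt_digits_length_iff (by norm_num) y).2 hy')
        exact_mod_cast this)
      (V + 1 - 10 ^ t) (10 ^ t) le_rfl
    rw [show 10 ^ t + (V + 1 - 10 ^ t) = V + 1 by omega] at h3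
    refine h3.trans ?_
    have h4 : ((V + 1 - 10 ^ t : ℕ) : ℝ) ≤ V := by
      have : 1 ≤ 10 ^ t := Nat.one_le_pow _ _ (by norm_num)
      exact_mod_cast (by omega : V + 1 - 10 ^ t ≤ V)
    push_cast
    rw [div_eq_mul_inv, pow_succ' (10 : ℝ) t]
    gcongr
  refine (Finset.abs_sum_le_sum_abs _ _).trans ((Finset.sum_le_sum hb).trans ?_)
  rw [Finset.sum_add_distrib, ← Finset.mul_sum, ← Finset.mul_sum]
  have h4 := sum_range_pow_le L
  have h5 := pow_digits_length_le hV
  have h6 := mul_le_mul_of_nonneg_left (sum_range_inv_pow_le L) (Nat.cast_nonneg (α := ℝ) V)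
  linarith

lemma exists_T_le_lt {N : ℕ} (hN : 1 ≤ N) : ∃ V, 1 ≤ V ∧ T V ≤ N ∧ N < T (V + 1) := by
  have hex : ∃ v, N < T v := ⟨N + 1, le_T (N + 1)⟩
  have h1 : T 1 = 1 := by simp [T]
  have hfind : 2 ≤ Nat.find hex := by
    by_contra! h
    have h2 := (Nat.find_spec hex).trans_le (T_mono (show Nat.find hex ≤ 1 by omega))
    omega
  refine ⟨Nat.find hex - 1, by omega, not_lt.1 (Nat.find_min hex (by omega)), ?_⟩
  rw [Nat.sub_add_cancel (by omega)]
  exact Nat.find_spec hex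

lemma digits_length_succ_le (V : ℕ) : (Nat.digits 10 (V + 1)).length ≤ V + 1 :=
  not_lt.1 fun h => (Nat.lt_pow_self (by norm_num)).not_ge
    ((Nat.lt_digits_length_iff (by norm_num) (V + 1)).1 h)

lemma log_le_digits_length {N V : ℕ} (hN : 1 ≤ N) (hV : N < T (V + 1)) :
    Real.log N ≤ 6 * (Nat.digits 10 V).length := by
  set L := (Nat.digits 10 V).length with hL
  have hVL : V + 1 ≤ 10 ^ L := Nat.lt_base_pow_length_digits (by norm_num)
  have hT : T (V + 1) ≤ (V + 1) * (V + 1) := by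
    unfold T
    refine (Finset.sum_le_card_nsmul _ _ (V + 1) fun j hj => ?_).trans (by simp)
    rw [Finset.mem_Icc] at hj
    obtain ⟨k, rfl⟩ := Nat.exists_eq_add_of_le' hj.1
    exact (digits_length_succ_le k).trans hj.2
  have hNL : (N : ℝ) ≤ (10 ^ L) * (10 ^ L) := by
    exact_mod_cast (hV.le.trans hT).trans (Nat.mul_le_mul hVL hVL)
  have h10 : Real.log 10 ≤ 3 := by
    rw [Real.log_le_iff_le_exp (by norm_num)]
    have h := Real.exp_one_gt_d9
    have : Real.exp 3 = Real.exp 1 ^ 3 := by rw [← Real.exp_nat_mul]; norm_num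
    rw [this]
    calc (10 : ℝ) ≤ 2.7 ^ 3 := by norm_num
      _ ≤ Real.exp 1 ^ 3 := by gcongr; linarith
  calc Real.log N ≤ Real.log ((10 ^ L) * (10 ^ L)) :=
        Real.log_le_log (by exact_mod_cast hN) hNL
    _ = 2 * L * Real.log 10 := by rw [← pow_add, Real.log_pow]; push_cast; ring
    _ ≤ 2 * L * 3 := by gcongr
    _ = 6 * L := by ring

lemma abs_sum_centred_le {γ : ℝ} (h0 : 0 ≤ γ) (h1 : γ < 1) {N : ℕ} (hN : 1 ≤ N) :
    |∑ n ∈ Finset.range N, centred γ (Int.fract (10 ^ n * champ))| * Real.log N ≤ 414 * N := by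
  obtain ⟨V, hV1, hV2, hV3⟩ := exists_T_le_lt hN
  have hlog := log_le_digits_length hN hV3
  have hlog0 : 0 ≤ Real.log N := Real.log_natCast_nonneg N
  have hVL := mul_digits_length_le_T hV1
  have hTN : (T V : ℝ) ≤ N := by exact_mod_cast hV2
  have hsum : |∑ n ∈ Finset.range N, centred γ (Int.fract (10 ^ n * champ))| ≤ 23 * V := by
    rw [← Finset.sum_range_add_sum_Ico _ hV2]
    have ha := abs_sum_centred_T_le h0 h1 hV1
    have hb := abs_sum_le_card (f := fun n => centred γ (Int.fract (10 ^ n * champ)))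
      (fun n => abs_centred_le h0 h1 _) (Finset.Ico (T V) N)
    have hc : ((Finset.Ico (T V) N).card : ℝ) ≤ 2 * V := by
      have := digits_length_succ_le V
      rw [T_succ] at hV3
      rw [Nat.card_Ico]
      exact_mod_cast (by omega : N - T V ≤ 2 * V)
    exact (abs_add_le _ _).trans (by linarith)
  calc _ ≤ 23 * V * (6 * (Nat.digits 10 V).length : ℝ) := by gcongr
    _ = 138 * (V * (Nat.digits 10 V).length) := by ring
    _ ≤ 414 * N := by linarith

/-- There is a constant `C > 0`, independent of `h` and of `γ`, such that for every
`h ≥ 1` there is a threshold `N₀` with: for every `γ ∈ [0,1)` with `10^h·γ ∈ ℤ` and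
every `N ≥ N₀`, `|#{n ≤ N : 10^{n−1}c mod 1 ∈ [0, γ)}/N − γ| ≤ C/log N`. -/
theorem champ_prefix_interval_count :
    ∃ C : ℝ, 0 < C ∧ ∀ h : ℕ, 1 ≤ h → ∃ N₀ : ℕ, ∀ γ : ℝ, γ ∈ Set.Ico (0 : ℝ) 1 →
      (∃ z : ℤ, (10 : ℝ) ^ h * γ = (z : ℝ)) → ∀ N : ℕ, N₀ ≤ N →
      |(((Finset.Icc 1 N).filter fun n =>
          Int.fract (10 ^ (n - 1) * champ) ∈ Set.Ico (0 : ℝ) γ).card : ℝ) / N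
        - γ| ≤ C / Real.log N := by
  refine ⟨414, by norm_num, fun h _ => ⟨2, fun γ hγ _ N hN => ?_⟩⟩
  have hN0 : (0 : ℝ) < N := by exact_mod_cast (by omega : 0 < N)
  have hlog : 0 < Real.log N := Real.log_pos (by exact_mod_cast hN)
  have hmain := abs_sum_centred_le hγ.1 hγ.2 (show 1 ≤ N by omega)
  have hcount : ∑ n ∈ Finset.range N, centred γ (Int.fract (10 ^ n * champ))
      = (((Finset.Icc 1 N).filter fun n =>
          Int.fract (10 ^ (n - 1) * champ) ∈ Set.Ico (0 : ℝ) γ).card : ℝ) - N * γ := by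
    rw [Finset.card_filter, ← Finset.Ico_add_one_right_eq_Icc, Finset.sum_Ico_eq_sum_range]
    simp only [centred, Finset.sum_sub_distrib, Set.mem_Ico, Int.fract_nonneg, true_and,
      Nat.add_sub_cancel, Nat.add_sub_cancel_left, Finset.sum_const, Finset.card_range,
      nsmul_eq_mul]
    push_cast
    rfl
  rw [hcount] at hmain
  rw [div_sub' hN0.ne', abs_div, abs_of_pos hN0, div_le_div_iff₀ hN0 hlog]
  exact hmain
end

section
/- A real number α ∈ [0,1) is normal in base 10 if and only if its discrepancy for base 10 tends to zero: lim_{N→∞} D(α, N) = 0. -/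
open scoped Classical

open Filter Finset Topology

/-- The proportion of `x 1, …, x N` lying in `s`. -/
noncomputable def freq (x : ℕ → ℝ) (s : Set ℝ) (N : ℕ) : ℝ :=
  (#{n ∈ Icc 1 N | x n ∈ s} : ℝ) / N

theorem freq_nonneg (x : ℕ → ℝ) (s : Set ℝ) (N : ℕ) : 0 ≤ freq x s N := by
  unfold freq; positivity

theorem freq_le_one (x : ℕ → ℝ) (s : Set ℝ) (N : ℕ) : freq x s N ≤ 1 := by
  refine div_le_one_of_le₀ ?_ (Nat.cast_nonneg N)
  exact_mod_cast (card_filter_le _ _).trans (by simp)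

theorem freq_mono (x : ℕ → ℝ) {s t : Set ℝ} (h : s ⊆ t) (N : ℕ) :
    freq x s N ≤ freq x t N := by
  unfold freq
  gcongr

theorem freq_union (x : ℕ → ℝ) {s t : Set ℝ} (h : Disjoint s t) (N : ℕ) :
    freq x (s ∪ t) N = freq x s N + freq x t N := by
  unfold freq
  rw [← add_div, ← Nat.cast_add, ← card_union_of_disjoint, ← filter_or]
  · simp only [Set.mem_union]
  · exact disjoint_filter.2 fun n _ hs ht => Set.disjoint_left.1 h hs ht

theorem freq_Ico_add_freq_Ico (x : ℕ → ℝ) {a b c : ℝ} (hab : a ≤ b) (hbc : b ≤ c) (N : ℕ) :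
    freq x (Set.Ico a b) N + freq x (Set.Ico b c) N = freq x (Set.Ico a c) N := by
  rw [← freq_union x (Set.Ico_disjoint_Ico_same) N, Set.Ico_union_Ico_eq_Ico hab hbc]

theorem freq_unit (x : ℕ → ℝ) (hx : ∀ n, x n ∈ Set.Ico (0 : ℝ) 1) {N : ℕ} (hN : N ≠ 0) :
    freq x (Set.Ico 0 1) N = 1 := by
  have : (N : ℝ) ≠ 0 := by exact_mod_cast hN
  unfold freq
  simp [filter_true_of_mem, hx, this, -Set.mem_Ico]

theorem discSeq_eq_sSup_freq (x : ℕ → ℝ) (N : ℕ) :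
    discSeq x N = sSup {d : ℝ | ∃ a b : ℝ, 0 ≤ a ∧ a < b ∧ b < 1 ∧
      d = |freq x (Set.Ico a b) N - (b - a)|} := by
  unfold discSeq freq
  congr!

theorem discSeq_nonneg (x : ℕ → ℝ) (N : ℕ) : 0 ≤ discSeq x N := by
  apply Real.sSup_nonneg
  rintro _ ⟨a, b, -, -, -, rfl⟩
  exact abs_nonneg _

theorem abs_freq_sub_le_discSeq (x : ℕ → ℝ) (N : ℕ) {a b : ℝ} (ha : 0 ≤ a) (hab : a < b)
    (hb : b < 1) : |freq x (Set.Ico a b) N - (b - a)| ≤ discSeq x N := by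
  rw [discSeq_eq_sSup_freq]
  refine le_csSup ⟨1, ?_⟩ ⟨a, b, ha, hab, hb, rfl⟩
  rintro _ ⟨a, b, ha, hab, hb, rfl⟩
  have h0 := freq_nonneg x (Set.Ico a b) N
  have h1 := freq_le_one x (Set.Ico a b) N
  rw [abs_le]
  constructor <;> linarith

theorem tendsto_freq_of_tendsto_discSeq {x : ℕ → ℝ} (hx : ∀ n, x n ∈ Set.Ico (0 : ℝ) 1)
    (h : Tendsto (discSeq x) atTop (𝓝 0)) {a b : ℝ} (ha : 0 ≤ a) (hab : a < b) (hb : b ≤ 1) :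
    Tendsto (freq x (Set.Ico a b)) atTop (𝓝 (b - a)) := by
  have key : ∀ {a b : ℝ}, 0 ≤ a → a < b → b < 1 →
      Tendsto (freq x (Set.Ico a b)) atTop (𝓝 (b - a)) := fun ha hab hb =>
    tendsto_iff_norm_sub_tendsto_zero.2 <| squeeze_zero (fun _ => norm_nonneg _)
      (fun N => abs_freq_sub_le_discSeq x N ha hab hb) h
  rcases hb.lt_or_eq with hb | rfl
  · exact key ha hab hb
  have hunit : Tendsto (freq x (Set.Ico 0 1)) atTop (𝓝 1) :=
    tendsto_const_nhds.congr' <| (eventually_ne_atTop 0).mono fun N hN => (freq_unit x hx hN).symm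
  rcases ha.lt_or_eq with ha | rfl
  · have := hunit.sub (key le_rfl ha hab)
    rw [sub_zero] at this
    refine this.congr fun N => ?_
    rw [← freq_Ico_add_freq_Ico x ha.le hab.le]
    ring
  · simpa using hunit

theorem tendsto_freq_Ico_zero_div {x : ℕ → ℝ} {q : ℕ} (hq : 0 < q)
    (h : ∀ m < q, Tendsto (freq x (Set.Ico (m / q : ℝ) ((m + 1) / q))) atTop (𝓝 (1 / q))) :
    ∀ m ≤ q, Tendsto (freq x (Set.Ico 0 (m / q : ℝ))) atTop (𝓝 (m / q)) := by
  intro m hm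
  induction m with
  | zero =>
    have h0 : freq x ∅ = fun _ => 0 := by ext N; simp [freq]
    simp [h0]
  | succ m ih =>
    have := (ih (by omega)).add (h m hm)
    rw [← add_div] at this
    push_cast
    refine this.congr fun N => ?_
    exact freq_Ico_add_freq_Ico x (by positivity) (by gcongr; linarith) N

/-- Control of the distribution function at the multiples of `1 / q` gives control everywhere. -/
theorem abs_freq_sub_le_of_forall_div {x : ℕ → ℝ} {q N : ℕ} (hq : 0 < q)
    (h : ∀ m ≤ q, |freq x (Set.Ico 0 (m / q : ℝ)) N - m / q| ≤ 1 / q) {t : ℝ} (ht : 0 ≤ t)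
    (ht1 : t < 1) : |freq x (Set.Ico 0 t) N - t| ≤ 2 / q := by
  have hq' : (0 : ℝ) < q := by exact_mod_cast hq
  set m := ⌊t * q⌋₊
  have hm1 : (m : ℝ) ≤ t * q := Nat.floor_le (by positivity)
  have hm2 : t * q < m + 1 := Nat.lt_floor_add_one _
  have hmq : m < q := by
    have : (m : ℝ) < q := by nlinarith
    exact_mod_cast this
  have hlo : (m / q : ℝ) ≤ t := (div_le_iff₀ hq').2 hm1
  have hhi : t ≤ ((m + 1 : ℕ) / q : ℝ) := by
    rw [le_div_iff₀ hq']; push_cast; exact hm2.le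
  have h1 := abs_le.1 (h m hmq.le)
  have h2 := abs_le.1 (h (m + 1) hmq)
  have h3 := freq_mono x (Set.Ico_subset_Ico_right hlo : Set.Ico 0 _ ⊆ Set.Ico 0 t) N
  have h4 := freq_mono x (Set.Ico_subset_Ico_right hhi : Set.Ico 0 t ⊆ Set.Ico 0 _) N
  have h5 : ((m + 1 : ℕ) / q : ℝ) = m / q + 1 / q := by push_cast; ring
  have h6 : (2 / q : ℝ) = 1 / q + 1 / q := by ring
  rw [abs_le]
  constructor <;> linarith [h1.1, h2.2]

theorem discSeq_le_of_forall_div {x : ℕ → ℝ} {q N : ℕ} (hq : 0 < q)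
    (h : ∀ m ≤ q, |freq x (Set.Ico 0 (m / q : ℝ)) N - m / q| ≤ 1 / q) :
    discSeq x N ≤ 4 / q := by
  rw [discSeq_eq_sSup_freq]
  refine Real.sSup_le ?_ (by positivity)
  rintro _ ⟨a, b, ha, hab, hb, rfl⟩
  have h1 := abs_le.1 (abs_freq_sub_le_of_forall_div hq h ha (hab.trans hb))
  have h2 := abs_le.1 (abs_freq_sub_le_of_forall_div hq h (ha.trans hab.le) hb)
  have h3 := freq_Ico_add_freq_Ico x ha hab.le N
  have h4 : (4 / q : ℝ) = 2 / q + 2 / q := by ring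
  rw [abs_le]
  constructor <;> linarith [h1.1, h1.2, h2.1, h2.2]

theorem tendsto_discSeq_iff_forall_cell {x : ℕ → ℝ} (hx : ∀ n, x n ∈ Set.Ico (0 : ℝ) 1)
    {b : ℕ} (hb : 1 < b) :
    Tendsto (discSeq x) atTop (𝓝 0) ↔ ∀ k : ℕ, 1 ≤ k → ∀ m < b ^ k,
      Tendsto (freq x (Set.Ico (m / (b ^ k : ℕ) : ℝ) ((m + 1) / (b ^ k : ℕ)))) atTop
        (𝓝 (1 / (b ^ k : ℕ))) := by
  constructor
  · intro h k _ m hm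
    have hq : (0 : ℝ) < (b ^ k : ℕ) := by exact_mod_cast Nat.pow_pos (by omega)
    have hm' : (m + 1 : ℝ) ≤ (b ^ k : ℕ) := by exact_mod_cast hm
    have := tendsto_freq_of_tendsto_discSeq hx h (a := (m / (b ^ k : ℕ) : ℝ))
      (b := (m + 1) / (b ^ k : ℕ)) (by positivity) (by gcongr; linarith)
      ((div_le_one hq).2 hm')
    rwa [← sub_div, add_sub_cancel_left] at this
  · intro h
    refine tendsto_order.2 ⟨fun e he => Eventually.of_forall fun N =>
      he.trans_le (discSeq_nonneg x N), fun e he => ?_⟩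
    obtain ⟨k, hk⟩ := pow_unbounded_of_one_lt (4 / e) (y := (b : ℝ)) (by exact_mod_cast hb)
    have hb1 : (1 : ℝ) < b := by exact_mod_cast hb
    have hq : 0 < b ^ (k + 1) := Nat.pow_pos (by omega)
    have hq' : (0 : ℝ) < (b ^ (k + 1) : ℕ) := by exact_mod_cast hq
    have hk' : 4 / e < (b ^ (k + 1) : ℕ) := by
      push_cast
      exact hk.trans (pow_lt_pow_right₀ hb1 (Nat.lt_succ_self k))
    have hev : ∀ᶠ N in atTop, ∀ m ∈ Iic (b ^ (k + 1)),
        |freq x (Set.Ico 0 (m / (b ^ (k + 1) : ℕ) : ℝ)) N - m / (b ^ (k + 1) : ℕ)|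
          ≤ 1 / (b ^ (k + 1) : ℕ) := by
      rw [eventually_all_finset]
      intro m hm
      have := tendsto_freq_Ico_zero_div hq (h (k + 1) (by omega)) m (mem_Iic.1 hm)
      filter_upwards [Metric.tendsto_nhds.1 this _ (one_div_pos.2 hq')] with N hN
      exact hN.le
    filter_upwards [hev] with N hN
    refine (discSeq_le_of_forall_div hq fun m hm => hN m (mem_Iic.2 hm)).trans_lt ?_
    rw [div_lt_iff₀ hq']
    rwa [div_lt_iff₀' he] at hk'

theorem digit_eq_floor_mod {α : ℝ} (hα : 0 ≤ α) (i : ℕ) : digit α i = ⌊α * 10 ^ i⌋₊ % 10 := by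
  unfold digit
  rw [← Int.natCast_floor_eq_floor (by positivity)]
  omega

theorem floor_mul_pow_add_div {α : ℝ} (i j : ℕ) :
    ⌊α * 10 ^ (i + j)⌋₊ / 10 ^ j = ⌊α * 10 ^ i⌋₊ := by
  rw [← Nat.floor_div_natCast]
  congr 1
  push_cast
  rw [pow_add, ← mul_assoc, mul_div_cancel_right₀ _ (by positivity)]

theorem fract_mem_Ico_div_iff {α : ℝ} (hα : 0 ≤ α) (i k m : ℕ) :
    Int.fract (10 ^ i * α) ∈ Set.Ico (m / (10 ^ k : ℕ) : ℝ) ((m + 1) / (10 ^ k : ℕ)) ↔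
      ⌊α * 10 ^ (i + k)⌋₊ % 10 ^ k = m := by
  have hq : (0 : ℝ) < (10 ^ k : ℕ) := by positivity
  have hfract : Int.fract (10 ^ i * α) * (10 ^ k : ℕ) =
      α * 10 ^ (i + k) - (10 ^ k * ⌊α * 10 ^ i⌋₊ : ℕ) := by
    rw [Int.fract, mul_comm (10 ^ i) α, ← natCast_floor_eq_intCast_floor (by positivity)]
    push_cast
    ring
  have hmod : ⌊α * 10 ^ (i + k)⌋₊ % 10 ^ k =
      ⌊Int.fract (10 ^ i * α) * (10 ^ k : ℕ)⌋₊ := by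
    rw [hfract, Nat.floor_sub_natCast, ← floor_mul_pow_add_div i k, Nat.mod_eq_sub]
  rw [hmod, Nat.floor_eq_iff (mul_nonneg (Int.fract_nonneg _) hq.le), Set.mem_Ico,
    div_le_iff₀ hq, lt_div_iff₀ hq]

/-- The digits `B` read as a number in base 10. -/
def blockValue {k : ℕ} : (Fin k → Fin 10) ≃ Fin (10 ^ k) :=
  (Fin.revPerm.arrowCongr (Equiv.refl _)).trans finFunctionFinEquiv

theorem forall_digit_eq_iff {α : ℝ} (hα : 0 ≤ α) {k : ℕ} (B : Fin k → Fin 10) (i : ℕ) :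
    (∀ j : Fin k, digit α (i + 1 + j) = B j) ↔
      ⌊α * 10 ^ (i + k)⌋₊ % 10 ^ k = blockValue B := by
  set A := ⌊α * 10 ^ (i + k)⌋₊
  have hA : A % 10 ^ k < 10 ^ k := Nat.mod_lt _ (by positivity)
  have hdigit : ∀ j : Fin k,
      digit α (i + 1 + j) = blockValue.symm ⟨A % 10 ^ k, hA⟩ j := by
    intro j
    have hexp : i + k = i + 1 + j + (k - (j + 1)) := by omega
    have hdvd : 10 ^ k = 10 ^ (k - (j + 1)) * 10 ^ (j + 1 : ℕ) := by
      rw [← pow_add]; congr 1; omega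
    have hval : (blockValue.symm ⟨A % 10 ^ k, hA⟩ j : ℕ) =
        A % 10 ^ k / 10 ^ (k - (j + 1)) % 10 := by
      simp [blockValue, Equiv.arrowCongr, finFunctionFinEquiv, Fin.val_rev]
    rw [hval, digit_eq_floor_mod hα, ← floor_mul_pow_add_div (i + 1 + j) (k - (j + 1)), ← hexp,
      hdvd, Nat.mod_mul_right_div_self, Nat.mod_mod_of_dvd _ (dvd_pow_self 10 (by omega))]
  simp_rw [hdigit, ← Fin.ext_iff]
  rw [← funext_iff, Equiv.symm_apply_eq, Fin.ext_iff]

theorem abs_occ_div_sub_freq_le {α : ℝ} (hα : 0 ≤ α) {k : ℕ} (B : Fin k → Fin 10) (N : ℕ) :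
    |(occ α B N : ℝ) / N - freq (fun n => Int.fract (10 ^ (n - 1) * α))
      (Set.Ico ((blockValue B : ℕ) / (10 ^ k : ℕ) : ℝ) (((blockValue B : ℕ) + 1) / (10 ^ k : ℕ))) N|
      ≤ k / N := by
  have hiff : ∀ n, 1 ≤ n → ((∀ j : Fin k, digit α (n + j) = B j) ↔
      Int.fract (10 ^ (n - 1) * α) ∈ Set.Ico ((blockValue B : ℕ) / (10 ^ k : ℕ) : ℝ)
        (((blockValue B : ℕ) + 1) / (10 ^ k : ℕ))) := by
    intro n hn
    obtain ⟨i, rfl⟩ := Nat.exists_eq_add_of_le' hn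
    rw [forall_digit_eq_iff hα, ← fract_mem_Ico_div_iff hα, Nat.add_sub_cancel]
  generalize Set.Ico ((blockValue B : ℕ) / (10 ^ k : ℕ) : ℝ)
    (((blockValue B : ℕ) + 1) / (10 ^ k : ℕ)) = I at hiff ⊢
  unfold occ freq
  beta_reduce
  set s := {n ∈ Icc 1 N | Int.fract (10 ^ (n - 1) * α) ∈ I}
  set t := {i ∈ Icc 1 N | i + k ≤ N + 1 ∧ ∀ j : Fin k, digit α (i + j) = B j}
  have hts : t ⊆ s := by
    intro n hn
    obtain ⟨hn, -, hB⟩ := mem_filter.1 hn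
    exact mem_filter.2 ⟨hn, (hiff n (mem_Icc.1 hn).1).1 hB⟩
  have hst : s ⊆ t ∪ Ioc (N - k) N := by
    intro n hn
    obtain ⟨hn, hI⟩ := mem_filter.1 hn
    have hB := (hiff n (mem_Icc.1 hn).1).2 hI
    rw [mem_Icc] at hn
    rw [mem_union, mem_filter, mem_Ioc, mem_Icc]
    by_cases h : n + k ≤ N + 1
    · exact Or.inl ⟨hn, h, hB⟩
    · exact Or.inr (by omega)
  have h1 : (#t : ℝ) ≤ #s := by exact_mod_cast card_le_card hts
  have h2 : (#s : ℝ) ≤ #t + k := by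
    have := (card_le_card hst).trans (card_union_le _ _)
    rw [Nat.card_Ioc] at this
    exact_mod_cast this.trans (by omega)
  rw [← sub_div, abs_div, Nat.abs_cast]
  gcongr
  rw [abs_le]
  constructor <;> linarith

theorem tendsto_occ_iff {α : ℝ} (hα : 0 ≤ α) {k : ℕ} (B : Fin k → Fin 10) (c : ℝ) :
    Tendsto (fun N : ℕ => (occ α B N : ℝ) / N) atTop (𝓝 c) ↔
      Tendsto (freq (fun n => Int.fract (10 ^ (n - 1) * α))
        (Set.Ico ((blockValue B : ℕ) / (10 ^ k : ℕ) : ℝ)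
          (((blockValue B : ℕ) + 1) / (10 ^ k : ℕ)))) atTop (𝓝 c) :=
  tendsto_iff_of_dist <| squeeze_zero (fun _ => dist_nonneg)
    (fun N => abs_occ_div_sub_freq_le hα B N) (tendsto_const_div_atTop_nhds_zero_nat (k : ℝ))

/-- A real number `α ∈ [0,1)` is normal in base 10 (all blocks of each length `k`
occur with asymptotic frequency `10^{−k}`) if and only if its discrepancy for
base 10 tends to zero. -/
theorem normal_iff_discrepancy_tendsto_zero (α : ℝ) (hα : α ∈ Set.Ico (0 : ℝ) 1) :
    (∀ k : ℕ, 1 ≤ k → ∀ B : Fin k → Fin 10,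
      Filter.Tendsto (fun N : ℕ => (occ α B N : ℝ) / N) Filter.atTop
        (nhds (1 / 10 ^ k)))
    ↔ Filter.Tendsto (fun N : ℕ => D α N) Filter.atTop (nhds 0) := by
  have hx : ∀ n : ℕ, Int.fract (10 ^ (n - 1) * α) ∈ Set.Ico (0 : ℝ) 1 := fun n =>
    ⟨Int.fract_nonneg _, Int.fract_lt_one _⟩
  refine Iff.trans ?_ (tendsto_discSeq_iff_forall_cell hx (b := 10) (by norm_num)).symm
  refine forall₂_congr fun k _ => ?_
  simp_rw [tendsto_occ_iff hα.1]
  constructor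
  · intro h m hm
    simpa using h (blockValue.symm ⟨m, hm⟩)
  · intro h B
    simpa using h _ (blockValue B).isLt
end
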